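/- Let q ≥ 3 be odd, a_0 ∈ ℤ, and let a_1, …, a_n be nonzero integers such that the finite sequence (a_1, …, a_n, (1)^{h_q}, 2, (1)^{h_q}) (i.e. followed by h_q entries 1, then 2, then h_q entries 1) is q-regular. Then a_n ≠ 1, the finite sequence (a_1, …, a_{n−1}, a_n − 1, (−1)^{h_q}, −2, (−1)^{h_q}) is also q-regular, the last denominators of both finite continued fractions are nonzero, and the values coincide: [a_0; a_1, …, a_n, (1)^{h_q}, 2, (1)^{h_q}] = [a_0; a_1, …, a_{n−1}, a_n − 1, (−1)^{h_q}, −2, (−1)^{h_q}]. -/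

import Mathlib

open Filter Topology

/-- `λ_q = 2 cos (π/q)`. -/
noncomputable def lamq (q : ℕ) : ℝ := 2 * Real.cos (Real.pi / q)

/-- `h_q = (q-2)/2` for even `q` and `(q-3)/2` for odd `q`. -/
def hQ (q : ℕ) : ℕ := if Even q then (q - 2) / 2 else (q - 3) / 2

/-- Forbidden blocks for the nearest `λ_q`-multiple continued fractions.
For `ε ∈ {1,-1}`: the block `(ε)^{h_q+1}`; for even `q` the blocks `((ε)^{h_q}, ε·m)`, `m ≥ 1`;
for odd `q` (including `q = 3`, where `h_q = 0`) the blocks `((ε)^{h_q}, ε·2, (ε)^{h_q}, ε·m)`,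
`m ≥ 1`. -/
def IsForbidden (q : ℕ) (L : List ℤ) : Prop :=
  ∃ ε : ℤ, (ε = 1 ∨ ε = -1) ∧
    (L = List.replicate (hQ q + 1) ε ∨
      (if Even q then
        ∃ m : ℤ, 1 ≤ m ∧ L = List.replicate (hQ q) ε ++ [ε * m]
      else
        ∃ m : ℤ, 1 ≤ m ∧
          L = List.replicate (hQ q) ε ++ ε * 2 :: (List.replicate (hQ q) ε ++ [ε * m])))

/-- An infinite sequence is `q`-regular if no finite subblock is forbidden. -/
def RegularSeq (q : ℕ) (a : ℕ → ℤ) : Prop :=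
  ∀ (l len : ℕ), ¬ IsForbidden q (List.ofFn fun j : Fin len => a (l + (j : ℕ)))

/-- An infinite sequence is dual `q`-regular if no reversed finite subblock is forbidden. -/
def DualRegularSeq (q : ℕ) (a : ℕ → ℤ) : Prop :=
  ∀ (l len : ℕ), ¬ IsForbidden q (List.ofFn fun j : Fin len => a (l + (j : ℕ))).reverse

/-- A finite sequence is `q`-regular if no contiguous subblock is forbidden. -/
def RegularList (q : ℕ) (L : List ℤ) : Prop :=
  ∀ B : List ℤ, B <:+: L → ¬ IsForbidden q B

/-- Numerators of the convergents: `p₀ = a₀λ`, `p₁ = a₁λ·p₀ - 1`,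
`pₙ = aₙλ·pₙ₋₁ - pₙ₋₂` (so that `p₋₁ = 1`, `p₋₂ = 0`).  Here `A n` is the digit `aₙ`. -/
noncomputable def cfP (lam : ℝ) (A : ℕ → ℤ) : ℕ → ℝ
  | 0 => (A 0 : ℝ) * lam
  | 1 => (A 1 : ℝ) * lam * ((A 0 : ℝ) * lam) - 1
  | (n + 2) => (A (n + 2) : ℝ) * lam * cfP lam A (n + 1) - cfP lam A n

/-- Denominators of the convergents: `q₀ = 1`, `q₁ = a₁λ`,
`qₙ = aₙλ·qₙ₋₁ - qₙ₋₂` (so that `q₋₁ = 0`, `q₋₂ = -1`). -/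
noncomputable def cfQ (lam : ℝ) (A : ℕ → ℤ) : ℕ → ℝ
  | 0 => 1
  | 1 => (A 1 : ℝ) * lam
  | (n + 2) => (A (n + 2) : ℝ) * lam * cfQ lam A (n + 1) - cfQ lam A n

/-- The λ-continued fraction with digit sequence `A` converges to `x`. -/
def CFConvergesTo (lam : ℝ) (A : ℕ → ℤ) (x : ℝ) : Prop :=
  (∀ n, cfQ lam A n ≠ 0) ∧
    Filter.Tendsto (fun n => cfP lam A n / cfQ lam A n) Filter.atTop (nhds x)

/-- The value `p_L/q_L` of the finite continued fraction `[a₀; a₁, …, a_L]`. -/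
noncomputable def cfValList (lam : ℝ) (a0 : ℤ) (L : List ℤ) : ℝ :=
  cfP lam (fun i => (a0 :: L).getD i 0) L.length /
    cfQ lam (fun i => (a0 :: L).getD i 0) L.length

/-- The last denominator `q_L` of the finite continued fraction `[a₀; a₁, …, a_L]`. -/
noncomputable def cfDenList (lam : ℝ) (a0 : ℤ) (L : List ℤ) : ℝ :=
  cfQ lam (fun i => (a0 :: L).getD i 0) L.length

/-- The modified floor: `⌊t⌋* = ⌈t⌉ - 1` for `t > 0` and `⌊t⌋* = ⌊t⌋` for `t ≤ 0`. -/
noncomputable def floorstar (t : ℝ) : ℤ := if 0 < t then ⌈t⌉ - 1 else ⌊t⌋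

/-- The nearest `λ`-multiple: `⟨y⟩ = ⌊y/λ + 1/2⌋*`. -/
noncomputable def nearestLam (lam : ℝ) (x : ℝ) : ℤ := floorstar (x / lam + 1 / 2)

/-- The interval map `f_q` on `I_q = [-λ/2, λ/2]`. -/
noncomputable def fq (lam : ℝ) (x : ℝ) : ℝ :=
  if x = 0 then 0 else -1 / x - (nearestLam lam (-1 / x) : ℝ) * lam

/-- `R_q`: equal to `1` for even `q`, and the positive root of `R² + (2-λ_q)R = 1` for odd `q`. -/
noncomputable def Rq (q : ℕ) : ℝ :=
  if Even q then 1 else (lamq q - 2 + Real.sqrt ((2 - lamq q) ^ 2 + 4)) / 2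

/-- `r_q = R_q - λ_q`. -/
noncomputable def rq (q : ℕ) : ℝ := Rq q - lamq q

/-- The map `⟨·⟩*` used by the dual algorithm. -/
noncomputable def nearestDual (lam R y : ℝ) : ℤ :=
  if 0 ≤ y then floorstar (y / lam + 1 - R / lam) else floorstar (y / lam + R / lam)

/-- The dual interval map `f_q^*` on `I_{R_q} = [-R_q, R_q]`. -/
noncomputable def fqstar (lam R : ℝ) (x : ℝ) : ℝ :=
  if x = 0 then 0 else -1 / x - (nearestDual lam R (-1 / x) : ℝ) * lam

/-- The matrix `S = [[0,-1],[1,0]]` as an element of `SL(2,ℝ)`. -/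
noncomputable def matS : Matrix.SpecialLinearGroup (Fin 2) ℝ :=
  ⟨!![0, -1; 1, 0], by norm_num [Matrix.det_fin_two_of]⟩

/-- The matrix `T = [[1,λ],[0,1]]` as an element of `SL(2,ℝ)`. -/
noncomputable def matT (lam : ℝ) : Matrix.SpecialLinearGroup (Fin 2) ℝ :=
  ⟨!![1, lam; 0, 1], by norm_num [Matrix.det_fin_two_of]⟩

/-- The Hecke triangle group `G_q`, the subgroup of `SL(2,ℝ)` generated by `S` and `T_q`. -/
noncomputable def Hecke (q : ℕ) : Subgroup (Matrix.SpecialLinearGroup (Fin 2) ℝ) :=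
  Subgroup.closure {matS, matT (lamq q)}

/-- The Möbius action of `g` on `x ∈ ℝ`. -/
noncomputable def moeb (g : Matrix.SpecialLinearGroup (Fin 2) ℝ) (x : ℝ) : ℝ :=
  (g.val 0 0 * x + g.val 0 1) / (g.val 1 0 * x + g.val 1 1)

/-- `x` and `y` are `G_q`-equivalent. -/
def GqEquiv (q : ℕ) (x y : ℝ) : Prop :=
  ∃ g ∈ Hecke q, (g.val 1 0 * x + g.val 1 1 ≠ 0) ∧ moeb g x = y

/-- Two sequences have a common tail. -/
def CommonTail (a b : ℕ → ℤ) : Prop := ∃ m n : ℕ, ∀ k : ℕ, a (m + k) = b (n + k)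

/-- The period block of `ρ_q`: `(3)` for `q = 3`, `((1)^{h_q-1}, 2)` for even `q`
and `((1)^{h_q}, 2, (1)^{h_q-1}, 2)` for odd `q ≥ 5`. -/
def rhoBlock (q : ℕ) : List ℤ :=
  if q = 3 then [3]
  else if Even q then List.replicate (hQ q - 1) 1 ++ [2]
  else List.replicate (hQ q) 1 ++ 2 :: (List.replicate (hQ q - 1) 1 ++ [2])

/-- The periodic sequence `ρ_q`. -/
def rho (q : ℕ) (i : ℕ) : ℤ := (rhoBlock q).getD (i % (rhoBlock q).length) 0

/-- `x` has the infinite regular `λ_q`-CF with digit sequence `A` (with `A 0 = a₀`). -/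
def HasRegCF (q : ℕ) (x : ℝ) (A : ℕ → ℤ) : Prop :=
  (∀ i, A (i + 1) ≠ 0) ∧ RegularSeq q (fun i => A (i + 1)) ∧ CFConvergesTo (lamq q) A x

/-- `x` has the infinite dual regular `λ_q`-CF with digit sequence `A` (with `A 0 = a₀`). -/
def HasDualRegCF (q : ℕ) (x : ℝ) (A : ℕ → ℤ) : Prop :=
  (∀ i, A (i + 1) ≠ 0) ∧ DualRegularSeq q (fun i => A (i + 1)) ∧ CFConvergesTo (lamq q) A x

/-- The digits of `x` produced by the algorithm for `f_q`: `a_{i+1} = ⟨-1 / f_q^i(x)⟩`. -/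
noncomputable def digitSeq (lam : ℝ) (x : ℝ) : ℕ → ℤ :=
  fun i => nearestLam lam (-1 / (fq lam)^[i] x)

/-- The digits of `x` produced by the algorithm for `f_q^*`: `b_{i+1} = ⟨-1 / (f_q^*)^i(x)⟩*`. -/
noncomputable def digitSeqStar (lam R : ℝ) (x : ℝ) : ℕ → ℤ :=
  fun i => nearestDual lam R (-1 / (fqstar lam R)^[i] x)

/-! Reading `(q_n, q_{n-1})` along the digits, each digit acts by a linear map, and a run `(ε)^k`
acts through the Chebyshev polynomials `S_j`. At `λ_q` with `q = 2h + 3`, the symmetry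
`sin ((h+1)π/q) = sin ((h+2)π/q)` makes the block `(ε)^h, 2ε, (ε)^h` send `(u, v)` to a vector with
first entry `ε S_h(λ)² (2u - ελv)`. Since lowering the preceding digit by one replaces `u` by
`u - λv`, exchanging `ε = 1` for `ε = -1` only changes the sign of numerator and denominator.
The denominator is nonzero because `λ < 2` and, in the absence of runs `(±1)^{h+1}`, every
quotient `q_{n-1}/q_n` lies in `[-1, 1]`. -/

section Convergents

variable {lam : ℝ}

/-- One step `(xₙ₋₁, xₙ₋₂) ↦ (xₙ, xₙ₋₁)` of the recursion shared by the numerators and the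
denominators of the convergents, driven by the digit `a`. Folding it over a list of digits
computes the last convergent. -/
def cfStep (lam : ℝ) (w : ℝ × ℝ) (a : ℤ) : ℝ × ℝ := (a * lam * w.1 - w.2, w.1)

lemma foldl_cfStep_eq_of_recurrence (L : List ℤ) (x : ℕ → ℝ)
    (hx : ∀ n, x (n + 2) = L.getD n 0 * lam * x (n + 1) - x n) :
    L.foldl (cfStep lam) (x 1, x 0) = (x (L.length + 1), x L.length) := by
  induction L generalizing x with
  | nil => rfl
  | cons a L ih =>
    have first_step : cfStep lam (x 1, x 0) a = (x 2, x 1) := by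
      simpa [cfStep] using (hx 0).symm
    rw [List.foldl_cons, first_step]
    exact ih (fun n => x (n + 1)) fun n => hx (n + 1)

lemma cfDenList_eq_foldl (a0 : ℤ) (L : List ℤ) :
    cfDenList lam a0 L = (L.foldl (cfStep lam) (1, 0)).1 := by
  let x : ℕ → ℝ
    | 0 => 0
    | n + 1 => cfQ lam (fun i => (a0 :: L).getD i 0) n
  have hx : ∀ n, x (n + 2) = L.getD n 0 * lam * x (n + 1) - x n
    | 0 => by simp [x, cfQ]
    | _ + 1 => rfl
  exact (congrArg Prod.fst (foldl_cfStep_eq_of_recurrence L x hx)).symm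

lemma cfP_getD_cons_eq_foldl (a0 : ℤ) (L : List ℤ) :
    cfP lam (fun i => (a0 :: L).getD i 0) L.length =
      (L.foldl (cfStep lam) (a0 * lam, 1)).1 := by
  let x : ℕ → ℝ
    | 0 => 1
    | n + 1 => cfP lam (fun i => (a0 :: L).getD i 0) n
  have hx : ∀ n, x (n + 2) = L.getD n 0 * lam * x (n + 1) - x n
    | 0 => rfl
    | _ + 1 => rfl
  exact (congrArg Prod.fst (foldl_cfStep_eq_of_recurrence L x hx)).symm

lemma cfValList_eq_foldl (a0 : ℤ) (L : List ℤ) :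
    cfValList lam a0 L =
      (L.foldl (cfStep lam) (a0 * lam, 1)).1 / (L.foldl (cfStep lam) (1, 0)).1 := by
  rw [← cfDenList_eq_foldl a0, ← cfP_getD_cons_eq_foldl]
  rfl

end Convergents

section SinQuot

/-- The Chebyshev value `S_{k-1}(lam)`, which is `sin (kθ) / sin θ` for `lam = 2 cos θ`. The index
is shifted so that `sinQuot lam k` governs a run of `k` equal digits `±1`. -/
noncomputable def sinQuot (lam : ℝ) (k : ℕ) : ℝ :=
  (Polynomial.Chebyshev.S ℝ ((k : ℤ) - 1)).eval lam

@[simp]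
lemma sinQuot_zero (lam : ℝ) : sinQuot lam 0 = 0 := by simp [sinQuot]

@[simp]
lemma sinQuot_one (lam : ℝ) : sinQuot lam 1 = 1 := by simp [sinQuot]

lemma sinQuot_add_two (lam : ℝ) (k : ℕ) :
    sinQuot lam (k + 2) = lam * sinQuot lam (k + 1) - sinQuot lam k := by
  have hS := Polynomial.Chebyshev.S_add_one ℝ (k : ℤ)
  simp only [sinQuot]
  push_cast
  rw [add_sub_cancel_right, show (k : ℤ) + 2 - 1 = k + 1 by ring, hS]
  simp

lemma sinQuot_two_mul_cos_mul_sin (θ : ℝ) (k : ℕ) :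
    sinQuot (2 * Real.cos θ) k * Real.sin θ = Real.sin (k * θ) := by
  simp [sinQuot]

lemma sin_mul_pi_div_pos {q k : ℕ} (hk : 0 < k) (hkq : k < q) :
    0 < Real.sin (k * (Real.pi / q)) := by
  have hq : (0 : ℝ) < q := by exact_mod_cast hk.trans hkq
  apply Real.sin_pos_of_pos_of_lt_pi
  · positivity
  · rw [← mul_div_assoc, div_lt_iff₀ hq, mul_comm]
    gcongr

lemma sin_pi_div_pos {q : ℕ} (hq : 1 < q) : 0 < Real.sin (Real.pi / q) := by
  simpa using sin_mul_pi_div_pos one_pos hq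

lemma sinQuot_lamq_pos {q k : ℕ} (hk : 0 < k) (hkq : k < q) : 0 < sinQuot (lamq q) k := by
  refine pos_of_mul_pos_left ?_ (sin_pi_div_pos (q := q) (by lia)).le
  rw [lamq, sinQuot_two_mul_cos_mul_sin]
  exact sin_mul_pi_div_pos hk hkq

lemma sinQuot_lamq_symm {q j k : ℕ} (hq : 1 < q) (hjk : j + k = q) :
    sinQuot (lamq q) j = sinQuot (lamq q) k := by
  have hq0 : (q : ℝ) ≠ 0 := by positivity
  have angle : (j : ℝ) * (Real.pi / q) = Real.pi - k * (Real.pi / q) := by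
    rw [← hjk] at hq0 ⊢
    push_cast at hq0 ⊢
    field_simp
    ring
  apply mul_right_cancel₀ (sin_pi_div_pos hq).ne'
  rw [lamq, sinQuot_two_mul_cos_mul_sin, sinQuot_two_mul_cos_mul_sin, angle, Real.sin_pi_sub]

lemma lamq_lt_two {q : ℕ} (hq : 1 < q) : lamq q < 2 := by
  have hsin := sin_pi_div_pos hq
  unfold lamq
  nlinarith [Real.sin_sq_add_cos_sq (Real.pi / q)]

end SinQuot

section CriticalBlock

/-- The block `(ε)^h, 2ε, (ε)^h`. For `q = 2h + 3` and `m ≥ 1`, following it by `εm` gives one of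
the two kinds of forbidden blocks. -/
def criticalBlock (h : ℕ) (ε : ℤ) : List ℤ :=
  List.replicate h ε ++ ε * 2 :: List.replicate h ε

lemma criticalBlock_one (h : ℕ) :
    criticalBlock h 1 = List.replicate h 1 ++ 2 :: List.replicate h 1 := rfl

lemma criticalBlock_neg_one (h : ℕ) :
    criticalBlock h (-1) = List.replicate h (-1) ++ (-2) :: List.replicate h (-1) := rfl

@[simp]
lemma length_criticalBlock (h : ℕ) (ε : ℤ) : (criticalBlock h ε).length = 2 * h + 1 := by
  simp only [criticalBlock, List.length_append, List.length_replicate, List.length_cons]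
  ring

lemma eq_or_eq_of_mem_criticalBlock {h : ℕ} {ε x : ℤ} (hx : x ∈ criticalBlock h ε) :
    x = ε ∨ x = ε * 2 := by
  simp only [criticalBlock, List.mem_append, List.mem_replicate, List.mem_cons] at hx
  tauto

variable {lam : ℝ} {h : ℕ} {ε : ℤ}

lemma foldl_cfStep_replicate (hε : ε = 1 ∨ ε = -1) (k : ℕ) (w : ℝ × ℝ) :
    (List.replicate k ε).foldl (cfStep lam) w =
      ((ε : ℝ) ^ k * (sinQuot lam (k + 1) * w.1 - ε * sinQuot lam k * w.2),
        (ε : ℝ) ^ k * (ε * sinQuot lam k * w.1 -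
          (lam * sinQuot lam k - sinQuot lam (k + 1)) * w.2)) := by
  have ε_sq : (ε : ℝ) ^ 2 = 1 := by rcases hε with rfl | rfl <;> norm_num
  induction k with
  | zero => simp
  | succ k ih =>
    rw [List.replicate_succ', List.foldl_append, ih, List.foldl_cons, List.foldl_nil, cfStep,
      sinQuot_add_two]
    ext
    · linear_combination ((ε : ℝ) ^ k * w.2 * (sinQuot lam (k + 1) - lam * sinQuot lam k)) * ε_sq
    · linear_combination (-(ε : ℝ) ^ k * sinQuot lam (k + 1) * w.1) * ε_sq

lemma foldl_cfStep_criticalBlock (hε : ε = 1 ∨ ε = -1)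
    (hsymm : sinQuot lam (h + 2) = sinQuot lam (h + 1)) (w : ℝ × ℝ) :
    ((criticalBlock h ε).foldl (cfStep lam) w).1 =
      ε * sinQuot lam (h + 1) ^ 2 * (2 * w.1 - ε * lam * w.2) := by
  have previous : sinQuot lam h = (lam - 1) * sinQuot lam (h + 1) := by
    linarith [sinQuot_add_two lam h]
  rw [criticalBlock, List.foldl_append, List.foldl_cons, foldl_cfStep_replicate hε,
    foldl_cfStep_replicate hε]
  simp only [cfStep, previous]
  rcases hε with rfl | rfl
  · push_cast
    ring
  · have sign_sq : ((-1 : ℝ) ^ h) ^ 2 = 1 := by rw [← pow_mul, mul_comm, pow_mul]; norm_num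
    push_cast
    linear_combination (-sinQuot lam (h + 1) ^ 2 * (2 * w.1 + lam * w.2)) * sign_sq

lemma foldl_cfStep_sub_one_criticalBlock_neg_one
    (hsymm : sinQuot lam (h + 2) = sinQuot lam (h + 1)) (D : List ℤ) (a : ℤ) (w : ℝ × ℝ) :
    ((D ++ (a - 1) :: criticalBlock h (-1)).foldl (cfStep lam) w).1 =
      -((D ++ a :: criticalBlock h 1).foldl (cfStep lam) w).1 := by
  simp only [List.foldl_append, List.foldl_cons]
  rw [foldl_cfStep_criticalBlock (.inr rfl) hsymm, foldl_cfStep_criticalBlock (.inl rfl) hsymm]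
  simp only [cfStep]
  push_cast
  ring

lemma cfDenList_sub_one_criticalBlock_neg_one
    (hsymm : sinQuot lam (h + 2) = sinQuot lam (h + 1)) (a0 : ℤ) (D : List ℤ) (a : ℤ) :
    cfDenList lam a0 (D ++ (a - 1) :: criticalBlock h (-1)) =
      -cfDenList lam a0 (D ++ a :: criticalBlock h 1) := by
  simp only [cfDenList_eq_foldl, foldl_cfStep_sub_one_criticalBlock_neg_one hsymm]

lemma cfValList_sub_one_criticalBlock_neg_one
    (hsymm : sinQuot lam (h + 2) = sinQuot lam (h + 1)) (a0 : ℤ) (D : List ℤ) (a : ℤ) :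
    cfValList lam a0 (D ++ (a - 1) :: criticalBlock h (-1)) =
      cfValList lam a0 (D ++ a :: criticalBlock h 1) := by
  simp only [cfValList_eq_foldl, foldl_cfStep_sub_one_criticalBlock_neg_one hsymm, neg_div_neg_eq]

end CriticalBlock

section Denominators

variable {lam t : ℝ} {h : ℕ} {L : List ℤ} {ε a : ℤ}

/-- The bound on the quotient `t = q_{n-1}/q_n` after the digits `L`: if `L` ends in at most `j ≤ h`
digits `ε`, then `εt` is at most `S_j(lam)/S_{j+1}(lam)`, the value that a run `(1)^j` produces from
the quotient `1/lam`. -/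
def RunBound (lam : ℝ) (h : ℕ) (L : List ℤ) (ε : ℤ) (t : ℝ) : Prop :=
  ∀ j ≤ h, ¬ List.replicate (j + 1) ε <:+ L →
    ε * t ≤ sinQuot lam (j + 1) / sinQuot lam (j + 2)

/-- The two properties of `lam = 2 cos (π/(2h + 3))` used for the denominators: the values
`S_0(lam), …, S_{h+1}(lam)` are positive, and the last two of them agree. -/
structure SinQuotSymm (lam : ℝ) (h : ℕ) : Prop where
  pos : ∀ k, 0 < k → k ≤ h + 2 → 0 < sinQuot lam k
  symm : sinQuot lam (h + 2) = sinQuot lam (h + 1)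

lemma sinQuotSymm_lamq {q : ℕ} (hq : q = 2 * h + 3) : SinQuotSymm (lamq q) h where
  pos _ hk hkh := sinQuot_lamq_pos hk (by lia)
  symm := sinQuot_lamq_symm (by lia) (by lia)

lemma SinQuotSymm.nonneg (hlam : SinQuotSymm lam h) {k : ℕ} (hk : k ≤ h + 2) :
    0 ≤ sinQuot lam k := by
  rcases Nat.eq_zero_or_pos k with rfl | hk0
  · rw [sinQuot_zero]
  · exact (hlam.pos k hk0 hk).le

lemma SinQuotSymm.one_le (hlam : SinQuotSymm lam h) : 1 ≤ lam := by
  have hlast := hlam.pos (h + 1) (by lia) (by lia)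
  have hprev : 0 ≤ (lam - 1) * sinQuot lam (h + 1) := by
    linarith [hlam.symm, sinQuot_add_two lam h, hlam.nonneg (k := h) (by lia)]
  linarith [nonneg_of_mul_nonneg_left hprev hlast]

lemma RunBound.mul_le_one (hlam : SinQuotSymm lam h) (hb : RunBound lam h L ε t)
    (hrun : ¬ List.replicate (h + 1) ε <:+: L) : ε * t ≤ 1 := by
  have hlast := hlam.pos (h + 1) (by lia) (by lia)
  simpa [hlam.symm, hlast.ne'] using hb h le_rfl fun hs => hrun hs.isInfix

lemma RunBound.div_le_mul_sub (hlam : SinQuotSymm lam h) (hb : RunBound lam h L ε t)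
    (hrun : ¬ List.replicate (h + 1) ε <:+: L) (ha : 1 ≤ ε * a)
    {j : ℕ} (hj : j ≤ h) (hs : ¬ List.replicate (j + 1) ε <:+ L ++ [a]) :
    sinQuot lam (j + 2) / sinQuot lam (j + 1) ≤ ε * (a * lam - t) := by
  have hj1 := hlam.pos (j + 1) (by lia) (by lia)
  have hj2 := hlam.pos (j + 2) (by lia) (by lia)
  have ratio : sinQuot lam (j + 2) / sinQuot lam (j + 1) =
      lam - sinQuot lam j / sinQuot lam (j + 1) := by
    rw [sinQuot_add_two]
    field_simp
  rw [ratio]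
  rcases ha.eq_or_lt with ha | ha
  · obtain rfl : a = ε := (Int.eq_of_mul_eq_one ha.symm).symm
    have a_sq : (a : ℝ) * a = 1 := by exact_mod_cast ha.symm
    have previous : a * t ≤ sinQuot lam j / sinQuot lam (j + 1) := by
      cases j with
      | zero => exact absurd (List.suffix_append L [a]) hs
      | succ i =>
        refine hb i (by lia) fun hi => hs ?_
        rw [List.replicate_succ']
        exact (List.suffix_append_inj_of_length_eq (by simp)).mpr ⟨hi, rfl⟩
    linear_combination previous - lam * a_sq
  · have one_le_lam := hlam.one_le
    have two_le : (2 : ℝ) ≤ ε * a := by exact_mod_cast ha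
    have hquot : 0 ≤ sinQuot lam j / sinQuot lam (j + 1) :=
      div_nonneg (hlam.nonneg (by lia)) hj1.le
    nlinarith [hb.mul_le_one hlam hrun]

lemma one_le_mul_sub_of_runBound (hlam : SinQuotSymm lam h) (hb : RunBound lam h L ε t)
    (hrun : ¬ List.replicate (h + 1) ε <:+: L ++ [a]) (ha : 1 ≤ ε * a) : 1 ≤ ε * (a * lam - t) := by
  have hlast := hlam.pos (h + 1) (by lia) (by lia)
  simpa [hlam.symm, hlast.ne'] using
    hb.div_le_mul_sub hlam (fun hi => hrun (List.infix_append_of_infix_left hi)) ha le_rfl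
      fun hs => hrun hs.isInfix

lemma mul_inv_eq_inv_mul (hε : ε = 1 ∨ ε = -1) (x : ℝ) : ε * x⁻¹ = (ε * x)⁻¹ := by
  rcases hε with rfl | rfl <;> simp

lemma one_le_or_one_le_neg_mul (hε : ε = 1 ∨ ε = -1) (ha : a ≠ 0) :
    1 ≤ ε * a ∨ 1 ≤ -ε * a := by
  rcases hε with rfl | rfl <;> lia

lemma runBound_append_singleton (hlam : SinQuotSymm lam h)
    (hb : ∀ ε : ℤ, ε = 1 ∨ ε = -1 → RunBound lam h L ε t)
    (hrun : ∀ ε : ℤ, ε = 1 ∨ ε = -1 → ¬ List.replicate (h + 1) ε <:+: L ++ [a])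
    (ha : a ≠ 0) (hε : ε = 1 ∨ ε = -1) : RunBound lam h (L ++ [a]) ε (a * lam - t)⁻¹ := by
  intro j hj hs
  have hj1 := hlam.pos (j + 1) (by lia) (by lia)
  have hj2 := hlam.pos (j + 2) (by lia) (by lia)
  rcases one_le_or_one_le_neg_mul hε ha with hεa | hεa
  · have lower := (hb ε hε).div_le_mul_sub hlam
      (fun hi => hrun ε hε (List.infix_append_of_infix_left hi)) hεa hj hs
    rw [mul_inv_eq_inv_mul hε, ← inv_div]
    exact inv_anti₀ (by positivity) lower
  · have hnε : -ε = 1 ∨ -ε = -1 := by lia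
    have opposite := one_le_mul_sub_of_runBound hlam (hb _ hnε) (hrun _ hnε) hεa
    have negative : ε * (a * lam - t) ≤ 0 := by
      push_cast at opposite
      linarith
    calc ε * (a * lam - t)⁻¹ = (ε * (a * lam - t))⁻¹ := mul_inv_eq_inv_mul hε _
      _ ≤ 0 := inv_nonpos.mpr negative
      _ ≤ sinQuot lam (j + 1) / sinQuot lam (j + 2) := by positivity

lemma foldl_cfStep_ne_zero_and_runBound (hlam : SinQuotSymm lam h) (L : List ℤ)
    (hnz : ∀ x ∈ L, x ≠ 0)
    (hrun : ∀ ε : ℤ, ε = 1 ∨ ε = -1 → ¬ List.replicate (h + 1) ε <:+: L) :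
    (L.foldl (cfStep lam) (1, 0)).1 ≠ 0 ∧ ∀ ε : ℤ, ε = 1 ∨ ε = -1 →
      RunBound lam h L ε
        ((L.foldl (cfStep lam) (1, 0)).2 / (L.foldl (cfStep lam) (1, 0)).1) := by
  induction L using List.reverseRecOn with
  | nil =>
    refine ⟨one_ne_zero, fun ε _ j hj _ => ?_⟩
    have hj1 := hlam.pos (j + 1) (by lia) (by lia)
    have hj2 := hlam.pos (j + 2) (by lia) (by lia)
    simp only [List.foldl_nil, zero_div, mul_zero]
    positivity
  | append_singleton L a ih =>
    obtain ⟨hu, hb⟩ := ih (fun x hx => hnz x (List.mem_append_left _ hx))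
      fun ε hε hi => hrun ε hε (List.infix_append_of_infix_left hi)
    have ha : a ≠ 0 := hnz a (by simp)
    rw [List.foldl_append, List.foldl_cons, List.foldl_nil]
    generalize L.foldl (cfStep lam) (1, 0) = w at hu hb
    have numerator : (cfStep lam w a).1 = (a * lam - w.2 / w.1) * w.1 := by
      simp only [cfStep]
      field_simp
    have quotient : (cfStep lam w a).2 / (cfStep lam w a).1 = (a * lam - w.2 / w.1)⁻¹ := by
      rw [numerator, cfStep, div_mul_cancel_right₀ hu]
    rw [quotient, numerator]
    refine ⟨mul_ne_zero ?_ hu, fun ε => runBound_append_singleton hlam hb hrun ha⟩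
    obtain ⟨ε, hε, hεa⟩ : ∃ ε : ℤ, (ε = 1 ∨ ε = -1) ∧ 1 ≤ ε * a := by
      rcases one_le_or_one_le_neg_mul (.inl rfl) ha with h1 | h1
      exacts [⟨1, .inl rfl, h1⟩, ⟨-1, .inr rfl, h1⟩]
    have lower := one_le_mul_sub_of_runBound hlam (hb ε hε) (hrun ε hε) hεa
    exact right_ne_zero_of_mul (one_pos.trans_le lower).ne'

lemma cfDenList_append_criticalBlock_one_ne_zero (hlam : SinQuotSymm lam h)
    (hlt : lam < 2) (a0 : ℤ) (hnz : ∀ x ∈ L, x ≠ 0)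
    (hrun : ∀ ε : ℤ, ε = 1 ∨ ε = -1 → ¬ List.replicate (h + 1) ε <:+: L) :
    cfDenList lam a0 (L ++ criticalBlock h 1) ≠ 0 := by
  have hlast := hlam.pos (h + 1) (by lia) (by lia)
  obtain ⟨hu, hb⟩ := foldl_cfStep_ne_zero_and_runBound hlam L hnz hrun
  have quotient_le := (hb 1 (.inl rfl)).mul_le_one hlam (hrun 1 (.inl rfl))
  rw [cfDenList_eq_foldl, List.foldl_append, foldl_cfStep_criticalBlock (.inl rfl) hlam.symm]
  generalize L.foldl (cfStep lam) (1, 0) = w at hu quotient_le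
  have factor : 2 * w.1 - (1 : ℤ) * lam * w.2 = w.1 * (2 - lam * (w.2 / w.1)) := by
    push_cast
    field_simp
  have factor_pos : 0 < 2 - lam * (w.2 / w.1) := by
    push_cast at quotient_le
    nlinarith [hlam.one_le]
  rw [factor]
  push_cast
  positivity

end Denominators

section Regularity

section Lists

variable {α : Type*} {l xs ys : List α} {c : α}

lemma infix_append_cons_iff :
    l <:+: xs ++ c :: ys ↔ l <:+: xs ∨ l <:+: ys ∨
      ∃ l₁ l₂, l = l₁ ++ c :: l₂ ∧ l₁ <:+ xs ∧ l₂ <+: ys := by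
  constructor
  · intro hi
    rcases List.infix_append_iff.mp hi with hxs | hcys | ⟨l₁, l₂, rfl, h₁, h₂⟩
    · exact .inl hxs
    · rcases List.infix_cons_iff.mp hcys with hpre | hys
      · rcases List.prefix_cons_iff.mp hpre with rfl | ⟨t, rfl, ht⟩
        · exact .inl List.nil_infix
        · exact .inr (.inr ⟨[], t, rfl, List.nil_suffix, ht⟩)
      · exact .inr (.inl hys)
    · rcases List.prefix_cons_iff.mp h₂ with rfl | ⟨t, rfl, ht⟩
      · exact .inl (by simpa using h₁.isInfix)
      · exact .inr (.inr ⟨l₁, t, rfl, h₁, ht⟩)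
  · rintro (hxs | hys | ⟨l₁, l₂, rfl, ⟨x, rfl⟩, ⟨y, rfl⟩⟩)
    · exact List.infix_append_of_infix_left hxs
    · exact List.infix_append_of_infix_right (List.infix_cons hys)
    · exact ⟨x, y, by simp⟩

lemma infix_append_cons_iff_of_notMem (hc : c ∉ l) :
    l <:+: xs ++ c :: ys ↔ l <:+: xs ∨ l <:+: ys := by
  rw [infix_append_cons_iff]
  grind

lemma infix_append_iff_of_forall_notMem_right (hl : l ≠ []) (hys : ∀ x ∈ l, x ∉ ys) :
    l <:+: xs ++ ys ↔ l <:+: xs := by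
  refine ⟨fun hi => ?_, List.infix_append_of_infix_left⟩
  obtain ⟨x, hx⟩ := List.exists_mem_of_ne_nil l hl
  rcases List.infix_append_iff.mp hi with h | h | ⟨l₁, l₂, rfl, h₁, h₂⟩
  · exact h
  · exact absurd (h.subset hx) (hys x hx)
  · obtain rfl : l₂ = [] := List.eq_nil_iff_forall_not_mem.mpr fun y hy =>
      hys y (List.mem_append_right _ hy) (h₂.subset hy)
    simpa using h₁.isInfix

end Lists

/-- A list contains none of the forbidden blocks of sign `ε` for `q = 2h + 3`. -/
def AvoidsForbidden (h : ℕ) (ε : ℤ) (L : List ℤ) : Prop :=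
  ¬ List.replicate (h + 1) ε <:+: L ∧ ∀ m, 1 ≤ m → ¬ criticalBlock h ε ++ [ε * m] <:+: L

lemma regularList_iff_avoidsForbidden {q : ℕ} (hq : Odd q) {L : List ℤ} :
    RegularList q L ↔ ∀ ε : ℤ, ε = 1 ∨ ε = -1 → AvoidsForbidden (hQ q) ε L := by
  simp only [RegularList, IsForbidden, if_neg (Nat.not_even_iff_odd.mpr hq), AvoidsForbidden,
    criticalBlock, List.append_assoc, List.cons_append]
  constructor
  · exact fun hreg ε hε => ⟨fun hi => hreg _ hi ⟨ε, hε, .inl rfl⟩,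
      fun m hm hi => hreg _ hi ⟨ε, hε, .inr ⟨m, hm, rfl⟩⟩⟩
  · rintro havoid B hB ⟨ε, hε, rfl | ⟨m, hm, rfl⟩⟩
    exacts [(havoid ε hε).1 hB, (havoid ε hε).2 m hm hB]

variable {q h : ℕ} {a : ℤ} {D : List ℤ}

lemma replicate_not_infix_criticalBlock {ε : ℤ} (hε : ε ≠ 0) :
    ¬ List.replicate (h + 1) ε <:+: criticalBlock h ε := by
  have pivot_notMem : ε * 2 ∉ List.replicate (h + 1) ε := by simp [hε]
  rw [criticalBlock, infix_append_cons_iff_of_notMem pivot_notMem, or_self]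
  exact fun hi => by simpa using hi.length_le

lemma eq_replicate_of_criticalBlock_eq {ε c : ℤ} (hc : c ≠ ε) {X Y : List ℤ}
    (hXY : criticalBlock h ε = X ++ c :: Y) : X = List.replicate h ε ∧ c = ε * 2 := by
  have c_notMem : c ∉ List.replicate h ε := fun hmem => hc (List.eq_of_mem_replicate hmem)
  obtain ⟨rfl, rfl, -⟩ := (List.append_cons_inj_of_notMem c_notMem c_notMem).mp hXY
  exact ⟨rfl, rfl⟩

lemma infix_or_eq_append_singleton_of_pos {B : List ℤ} (hB : B ≠ []) (hpos : ∀ x ∈ B, 0 < x)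
    (hi : B <:+: D ++ (a - 1) :: criticalBlock h (-1)) :
    B <:+: D ∨ ∃ G, B = G ++ [a - 1] ∧ G <:+ D := by
  have disjoint : ∀ x ∈ B, x ∉ criticalBlock h (-1) := by
    intro x hx hx'
    have := hpos x hx
    have := eq_or_eq_of_mem_criticalBlock hx'
    lia
  rw [List.append_cons, infix_append_iff_of_forall_notMem_right hB disjoint,
    List.infix_concat_iff, List.suffix_concat_iff] at hi
  tauto

lemma AvoidsForbidden.sub_one_of_one (hav : AvoidsForbidden h 1 (D ++ a :: criticalBlock h 1)) :
    AvoidsForbidden h 1 (D ++ (a - 1) :: criticalBlock h (-1)) := by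
  refine ⟨fun hi => ?_, fun m hm hi => ?_⟩
  · rcases infix_or_eq_append_singleton_of_pos (by simp) (by simp) hi with hD | ⟨G, hG, hGD⟩
    · exact hav.1 (List.infix_append_of_infix_left hD)
    · rw [List.replicate_succ'] at hG
      obtain ⟨rfl, ha⟩ := List.append_singleton_inj.mp hG
      obtain rfl : a = 2 := by lia
      -- After `a = 2`, the ones of `D` and of the block form the forbidden block with `m = 2`.
      refine hav.2 2 (by norm_num) ?_
      obtain ⟨X, rfl⟩ := hGD
      exact ⟨X, List.replicate h 1, by simp [criticalBlock]⟩
  · have block_pos : ∀ x ∈ criticalBlock h 1 ++ [1 * m], 0 < x := by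
      intro x hx
      rcases List.mem_append.mp hx with hx | hx
      · rcases eq_or_eq_of_mem_criticalBlock hx with rfl | rfl <;> norm_num
      · linarith [List.mem_singleton.mp hx]
    rcases infix_or_eq_append_singleton_of_pos (by simp) block_pos hi with hD | ⟨G, hG, hGD⟩
    · exact hav.2 m hm (List.infix_append_of_infix_left hD)
    · obtain ⟨rfl, ha⟩ := List.append_singleton_inj.mp hG
      obtain rfl : a = m + 1 := by lia
      refine hav.2 (m + 1) (by lia) ?_
      obtain ⟨X, rfl⟩ := hGD
      exact ⟨X, criticalBlock h 1, by simp⟩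

lemma AvoidsForbidden.sub_one_of_neg_one (ha : a ≠ 0)
    (hav : AvoidsForbidden h (-1) (D ++ a :: criticalBlock h 1)) :
    AvoidsForbidden h (-1) (D ++ (a - 1) :: criticalBlock h (-1)) := by
  refine ⟨fun hi => ?_, fun m hm hi => ?_⟩
  · have last_notMem : a - 1 ∉ List.replicate (h + 1) (-1) := by simp [ha]
    rcases (infix_append_cons_iff_of_notMem last_notMem).mp hi with hD | hblock
    · exact hav.1 (List.infix_append_of_infix_left hD)
    · exact replicate_not_infix_criticalBlock (by norm_num) hblock
  · rcases infix_append_cons_iff.mp hi with hD | hblock | ⟨G, T, hGT, ⟨X, rfl⟩, hT⟩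
    · exact hav.2 m hm (List.infix_append_of_infix_left hD)
    · exact absurd hblock.length_le (by simp)
    rcases T.eq_nil_or_concat' with rfl | ⟨T, x, rfl⟩
    · obtain ⟨rfl, hm'⟩ := List.append_singleton_inj.mp hGT
      obtain rfl : a = -1 * (m - 1) := by lia
      exact hav.2 (m - 1) (by lia) ⟨X, criticalBlock h 1, by simp⟩
    · rw [← List.cons_append, ← List.append_assoc] at hGT
      obtain ⟨hblock, -⟩ := List.append_singleton_inj.mp hGT
      obtain ⟨rfl, ha'⟩ := eq_replicate_of_criticalBlock_eq (by lia) hblock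
      obtain rfl : a = -1 := by lia
      exact hav.1 ⟨X, criticalBlock h 1, by simp [List.replicate_succ']⟩

lemma RegularList.ne_one (hq : Odd q)
    (hreg : RegularList q (D ++ a :: criticalBlock (hQ q) 1)) : a ≠ 1 := by
  rintro rfl
  refine ((regularList_iff_avoidsForbidden hq).mp hreg 1 (.inl rfl)).1
    ⟨D, 2 :: List.replicate (hQ q) 1, ?_⟩
  simp [criticalBlock, List.replicate_succ]

lemma RegularList.sub_one_criticalBlock_neg_one (hq : Odd q) (ha : a ≠ 0)
    (hreg : RegularList q (D ++ a :: criticalBlock (hQ q) 1)) :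
    RegularList q (D ++ (a - 1) :: criticalBlock (hQ q) (-1)) := by
  rw [regularList_iff_avoidsForbidden hq] at hreg ⊢
  rintro ε (rfl | rfl)
  · exact (hreg 1 (.inl rfl)).sub_one_of_one
  · exact (hreg (-1) (.inr rfl)).sub_one_of_neg_one ha

end Regularity

lemma eq_two_mul_hQ_add_three {q : ℕ} (hq : 3 ≤ q) (hqo : Odd q) : q = 2 * hQ q + 3 := by
  rw [hQ, if_neg (Nat.not_even_iff_odd.mpr hqo)]
  obtain ⟨k, rfl⟩ := hqo
  lia

/-- For odd `q ≥ 3`: if `(a₁,…,aₙ,(1)^{h_q},2,(1)^{h_q})` is `q`-regular, then `aₙ ≠ 1`,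
the sequence `(a₁,…,aₙ₋₁,aₙ-1,(-1)^{h_q},-2,(-1)^{h_q})` is `q`-regular, both finite continued
fractions have nonzero last denominator, and their values coincide. -/
theorem stmt4 (q : ℕ) (hq : 3 ≤ q) (hqo : Odd q) (a0 : ℤ) (L : List ℤ) (hL : L ≠ [])
    (hnz : ∀ x ∈ L, x ≠ 0)
    (hreg : RegularList q
      (L ++ (List.replicate (hQ q) 1 ++ 2 :: List.replicate (hQ q) 1))) :
    L.getLast hL ≠ 1 ∧
    RegularList q (L.dropLast ++ (L.getLast hL - 1) ::
      (List.replicate (hQ q) (-1) ++ (-2) :: List.replicate (hQ q) (-1))) ∧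
    cfDenList (lamq q) a0
      (L ++ (List.replicate (hQ q) 1 ++ 2 :: List.replicate (hQ q) 1)) ≠ 0 ∧
    cfDenList (lamq q) a0 (L.dropLast ++ (L.getLast hL - 1) ::
      (List.replicate (hQ q) (-1) ++ (-2) :: List.replicate (hQ q) (-1))) ≠ 0 ∧
    cfValList (lamq q) a0
      (L ++ (List.replicate (hQ q) 1 ++ 2 :: List.replicate (hQ q) 1)) =
      cfValList (lamq q) a0 (L.dropLast ++ (L.getLast hL - 1) ::
        (List.replicate (hQ q) (-1) ++ (-2) :: List.replicate (hQ q) (-1))) := by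
  obtain ⟨D, a, rfl⟩ := L.eq_nil_or_concat'.resolve_left hL
  simp only [List.getLast_append_singleton, List.dropLast_concat, ← criticalBlock_one,
    ← criticalBlock_neg_one] at hreg ⊢
  have hh := eq_two_mul_hQ_add_three hq hqo
  have hlam := sinQuotSymm_lamq hh
  have runs : ∀ ε : ℤ, ε = 1 ∨ ε = -1 → ¬ List.replicate (hQ q + 1) ε <:+: D ++ [a] :=
    fun ε hε hi => ((regularList_iff_avoidsForbidden hqo).mp hreg ε hε).1
      (List.infix_append_of_infix_left hi)
  have den_ne_zero := cfDenList_append_criticalBlock_one_ne_zero hlam (lamq_lt_two (by lia)) a0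
    hnz runs
  rw [← List.append_cons] at hreg den_ne_zero ⊢
  refine ⟨hreg.ne_one hqo, hreg.sub_one_criticalBlock_neg_one hqo (hnz a (by simp)),
    den_ne_zero, ?_, (cfValList_sub_one_criticalBlock_neg_one hlam.symm a0 D a).symm⟩
  rw [cfDenList_sub_one_criticalBlock_neg_one hlam.symm]
  exact neg_ne_zero.mpr den_ne_zero
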